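/- For every integer k ≥ 4, there exists a finite simple C4-free graph H with clique partition number θ(H) = k which admits a frozen (k+1)-clique-partition. Consequently, for every integer k ≥ 4, there exists a finite simple 2K2-free graph G with chromatic number χ(G) = k which admits a frozen (k+1)-colouring. -/

import Mathlib

/-- A graph is `2K₂`-free if it has no induced subgraph isomorphic to `2K₂`
(two vertex-disjoint edges with no edges between them). -/
def TwoK2Free {V : Type*} (G : SimpleGraph V) : Prop :=
  ¬ ∃ a b c d : V, G.Adj a b ∧ G.Adj c d ∧
      ¬ G.Adj a c ∧ ¬ G.Adj a d ∧ ¬ G.Adj b c ∧ ¬ G.Adj b d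

/-- A graph is `C₄`-free if it has no induced subgraph isomorphic to the 4-cycle. -/
def C4Free {V : Type*} (G : SimpleGraph V) : Prop :=
  ¬ ∃ a b c d : V, a ≠ c ∧ b ≠ d ∧ G.Adj a b ∧ G.Adj b c ∧ G.Adj c d ∧ G.Adj d a ∧
      ¬ G.Adj a c ∧ ¬ G.Adj b d

/-- `f` describes a partition of the vertices of `G` into at most `k` cliques:
each fibre of `f` is a clique. -/
def IsCliquePartition {V : Type*} (G : SimpleGraph V) {k : ℕ} (f : V → Fin k) : Prop :=
  ∀ a b : V, f a = f b → a ≠ b → G.Adj a b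

/-- A clique partition is frozen if every vertex has a non-neighbour in each clique
of the partition other than the clique containing it. -/
def IsFrozenCliquePartition {V : Type*} (G : SimpleGraph V) {k : ℕ} (f : V → Fin k) : Prop :=
  IsCliquePartition G f ∧ ∀ (v : V) (j : Fin k), j ≠ f v → ∃ w : V, f w = j ∧ ¬ G.Adj v w

/-- The clique partition number `θ(G)`: the least `k` such that the vertices of `G`
can be partitioned into at most `k` cliques. -/
noncomputable def cliquePartNum {V : Type*} (G : SimpleGraph V) : ℕ :=
  sInf {k : ℕ | ∃ f : V → Fin k, IsCliquePartition G f}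

/-- A colouring is frozen if every vertex has a neighbour in each colour class
other than its own. -/
def IsFrozenColoring {V : Type*} (G : SimpleGraph V) {k : ℕ} (C : G.Coloring (Fin k)) : Prop :=
  ∀ (v : V) (j : Fin k), j ≠ C v → ∃ w : V, G.Adj v w ∧ C w = j

/-!
Let `H₀` be the triangular prism with two of its three rungs subdivided twice. It has no 4-cycle.
The two triangles and the middle edges of the two subdivided rungs cover it by four cliques, and it
has four independent vertices, so `θ(H₀) = 4`. The remaining edges of the rungs form a perfect
matching of five edges none of which lies in a triangle, so no vertex is adjacent to both ends of
another matching edge: the matching is a frozen 5-clique-partition. Each added isolated vertex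
raises both numbers by one, and complementation turns clique partitions into colourings.
-/

namespace C4Free

variable {V W : Type*} {G : SimpleGraph V} {H : SimpleGraph W}

theorem of_commonNeighbors_subsingleton
    (hG : ∀ a c, a ≠ c → (G.commonNeighbors a c).Subsingleton) : C4Free G := by
  rintro ⟨a, b, c, d, hac, hbd, hab, hbc, hcd, hda, -, -⟩
  exact hbd (hG a c hac ⟨hab, hbc.symm⟩ ⟨hda.symm, hcd⟩)

theorem bot : C4Free (⊥ : SimpleGraph V) := by
  rintro ⟨a, b, c, d, -, -, hab, -⟩
  exact hab

theorem of_embedding (hH : C4Free H) (e : G ↪g H) : C4Free G := by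
  rintro ⟨a, b, c, d, hac, hbd, hab, hbc, hcd, hda, hnac, hnbd⟩
  exact hH ⟨e a, e b, e c, e d, e.injective.ne hac, e.injective.ne hbd, e.map_adj_iff.2 hab,
    e.map_adj_iff.2 hbc, e.map_adj_iff.2 hcd, e.map_adj_iff.2 hda, e.map_adj_iff.not.2 hnac,
    e.map_adj_iff.not.2 hnbd⟩

theorem sum (hG : C4Free G) (hH : C4Free H) : C4Free (G ⊕g H) := by
  rintro ⟨a | a, b | b, c | c, d | d, hac, hbd, hab, hbc, hcd, hda, hnac, hnbd⟩ <;>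
    try contradiction
  · exact hG ⟨a, b, c, d, by simpa using hac, by simpa using hbd, hab, hbc, hcd, hda, hnac, hnbd⟩
  · exact hH ⟨a, b, c, d, by simpa using hac, by simpa using hbd, hab, hbc, hcd, hda, hnac, hnbd⟩

theorem twoK2Free_compl (hG : C4Free G) : TwoK2Free Gᶜ := by
  rintro ⟨a, b, c, d, hab, hcd, hac, had, hbc, hbd⟩
  have adj_of_not_compl {x y : V} (hne : x ≠ y) (h : ¬ Gᶜ.Adj x y) : G.Adj x y := by
    simpa [SimpleGraph.compl_adj, hne] using h
  have hne_ac : a ≠ c := by rintro rfl; exact had hcd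
  have hne_ad : a ≠ d := by rintro rfl; exact hac hcd.symm
  have hne_bc : b ≠ c := by rintro rfl; exact hac hab
  have hne_bd : b ≠ d := by rintro rfl; exact had hab
  exact hG ⟨a, c, b, d, hab.ne, hcd.ne, adj_of_not_compl hne_ac hac,
    (adj_of_not_compl hne_bc hbc).symm, adj_of_not_compl hne_bd hbd,
    (adj_of_not_compl hne_ad had).symm, hab.2, hcd.2⟩

end C4Free

namespace IsCliquePartition

variable {V W : Type*} {G : SimpleGraph V} {H : SimpleGraph W} {k l : ℕ}
  {f : V → Fin k} {g : W → Fin l}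

theorem comp_embedding (hg : IsCliquePartition H g) (e : G ↪g H) :
    IsCliquePartition G (g ∘ e) :=
  fun _ _ hab hne ↦ e.map_adj_iff.1 (hg _ _ hab (e.injective.ne hne))

theorem sum (hf : IsCliquePartition G f) (hg : IsCliquePartition H g) :
    IsCliquePartition (G ⊕g H) (finSumFinEquiv ∘ Sum.map f g) := by
  intro a b hab hne
  replace hab : Sum.map f g a = Sum.map f g b := finSumFinEquiv.injective hab
  rcases a with a | a <;> rcases b with b | b
  · exact hf a b (Sum.inl_injective hab) (by simpa using hne)
  · exact absurd hab Sum.inl_ne_inr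
  · exact absurd hab Sum.inr_ne_inl
  · exact hg a b (Sum.inr_injective hab) (by simpa using hne)

theorem card_le_of_isIndepSet (hf : IsCliquePartition G f) {s : Finset V}
    (hs : G.IsIndepSet s) : s.card ≤ k := by
  have f_injOn : Set.InjOn f s := by
    intro a ha b hb hab
    by_contra hne
    exact hs ha hb hne (hf a b hab hne)
  simpa using Finset.card_le_card_of_injOn f (fun _ _ ↦ Finset.mem_univ _) f_injOn

theorem cliquePartNum_eq_of_isIndepSet (hf : IsCliquePartition G f) {s : Finset V}
    (hs : G.IsIndepSet s) (hcard : s.card = k) : cliquePartNum G = k := by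
  refine le_antisymm (Nat.sInf_le ⟨f, hf⟩) (le_csInf ⟨k, f, hf⟩ ?_)
  rintro l ⟨g, hg⟩
  exact hcard ▸ hg.card_le_of_isIndepSet hs

/-- The cliques of a clique partition of `G`, seen as the colour classes of a colouring of the
complement of `G`. -/
def complColoring (hf : IsCliquePartition G f) : Gᶜ.Coloring (Fin k) :=
  .mk f fun hab hfab ↦ hab.2 (hf _ _ hfab hab.1)

theorem chromaticNumber_compl (hf : IsCliquePartition G f) :
    Gᶜ.chromaticNumber = cliquePartNum G := by
  have colorable_iff (n : ℕ) : Gᶜ.Colorable n ↔ ∃ g : V → Fin n, IsCliquePartition G g := by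
    refine ⟨fun ⟨C⟩ ↦ ⟨C, fun a b hab hne ↦ ?_⟩, fun ⟨_, hg⟩ ↦ ⟨hg.complColoring⟩⟩
    by_contra hnadj
    exact C.valid ⟨hne, hnadj⟩ hab
  have compl_colorable : Gᶜ.Colorable k := ⟨hf.complColoring⟩
  simp only [compl_colorable.chromaticNumber_eq_sInf, colorable_iff, cliquePartNum]

end IsCliquePartition

theorem cliquePartNum_congr {V W : Type*} {G : SimpleGraph V} {H : SimpleGraph W} (e : G ≃g H) :
    cliquePartNum G = cliquePartNum H := by
  have exists_iff (k : ℕ) : (∃ f : V → Fin k, IsCliquePartition G f) ↔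
      ∃ g : W → Fin k, IsCliquePartition H g :=
    ⟨fun ⟨_, hf⟩ ↦ ⟨_, hf.comp_embedding e.symm.toEmbedding⟩,
      fun ⟨_, hg⟩ ↦ ⟨_, hg.comp_embedding e.toEmbedding⟩⟩
  simp only [cliquePartNum, exists_iff]

namespace IsFrozenCliquePartition

variable {V W : Type*} {G : SimpleGraph V} {H : SimpleGraph W} {k l : ℕ}
  {f : V → Fin k} {g : W → Fin l}

theorem bot_id (k : ℕ) : IsFrozenCliquePartition (⊥ : SimpleGraph (Fin k)) id :=
  ⟨fun _ _ hab hne ↦ absurd hab hne, fun _ j _ ↦ ⟨j, rfl, not_false⟩⟩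

theorem comp_iso (hg : IsFrozenCliquePartition H g) (e : G ≃g H) :
    IsFrozenCliquePartition G (g ∘ e) := by
  refine ⟨hg.1.comp_embedding e.toEmbedding, fun v j hj ↦ ?_⟩
  obtain ⟨w, rfl, hvw⟩ := hg.2 (e v) j hj
  obtain ⟨u, rfl⟩ := e.surjective w
  exact ⟨u, rfl, e.map_adj_iff.not.1 hvw⟩

theorem sum (hf : IsFrozenCliquePartition G f) (hg : IsFrozenCliquePartition H g)
    (hf_surj : Function.Surjective f) (hg_surj : Function.Surjective g) :
    IsFrozenCliquePartition (G ⊕g H) (finSumFinEquiv ∘ Sum.map f g) := by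
  refine ⟨hf.1.sum hg.1, fun v j hj ↦ ?_⟩
  obtain ⟨i, rfl⟩ := finSumFinEquiv.surjective j
  replace hj : i ≠ Sum.map f g v := fun h ↦ hj (congrArg finSumFinEquiv h)
  suffices ∃ w, Sum.map f g w = i ∧ ¬ (G ⊕g H).Adj v w from
    this.imp fun _ hw ↦ ⟨congrArg finSumFinEquiv hw.1, hw.2⟩
  rcases v with v | v <;> rcases i with i | i
  · obtain ⟨w, rfl, hvw⟩ := hf.2 v i fun h ↦ hj (congrArg Sum.inl h)
    exact ⟨.inl w, rfl, hvw⟩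
  · obtain ⟨w, rfl⟩ := hg_surj i
    exact ⟨.inr w, rfl, by simp⟩
  · obtain ⟨w, rfl⟩ := hf_surj i
    exact ⟨.inl w, rfl, by simp⟩
  · obtain ⟨w, rfl, hvw⟩ := hg.2 v i fun h ↦ hj (congrArg Sum.inr h)
    exact ⟨.inr w, rfl, hvw⟩

theorem isFrozenColoring_complColoring (hf : IsFrozenCliquePartition G f) :
    IsFrozenColoring Gᶜ hf.1.complColoring := by
  intro v j hj
  obtain ⟨w, rfl, hvw⟩ := hf.2 v j hj
  exact ⟨w, ⟨fun h ↦ hj (congrArg f h.symm), hvw⟩, rfl⟩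

end IsFrozenCliquePartition

theorem isIndepSet_disjSum {V W : Type*} {G : SimpleGraph V} {H : SimpleGraph W}
    {s : Finset V} {t : Finset W} (hs : G.IsIndepSet s) (ht : H.IsIndepSet t) :
    (G ⊕g H).IsIndepSet (s.disjSum t) := by
  rintro (a | a) ha (b | b) hb hne
  · exact hs (by simpa using ha) (by simpa using hb) (by simpa using hne)
  · simp
  · simp
  · exact ht (by simpa using ha) (by simpa using hb) (by simpa using hne)

/-- The triangular prism with two of its three rungs subdivided twice, drawn as a Hamiltonian
10-cycle with three chords: the triangles are `{9, 0, 1}` and `{4, 5, 6}`, the rungs are `0 5`,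
`1 2 3 4` and `6 7 8 9`. -/
def subdividedPrism : SimpleGraph (Fin 10) :=
  SimpleGraph.cycleGraph 10 ⊔ SimpleGraph.fromEdgeSet {s(9, 1), s(4, 6), s(0, 5)}

namespace subdividedPrism

instance : DecidableRel subdividedPrism.Adj :=
  inferInstanceAs (DecidableRel (_ ⊔ _ : SimpleGraph (Fin 10)).Adj)

/-- The two triangles and the middle edges of the two subdivided rungs. -/
def cliquePartition : Fin 10 → Fin 4 := ![0, 0, 1, 1, 2, 2, 2, 3, 3, 0]

/-- The unsubdivided rung and the end edges of the two subdivided rungs. -/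
def matching : Fin 10 → Fin 5 := ![0, 1, 1, 2, 2, 0, 3, 3, 4, 4]

theorem c4Free : C4Free subdividedPrism := by
  have unique_commonNeighbor : ∀ a c, a ≠ c → ∀ b, subdividedPrism.Adj a b →
      subdividedPrism.Adj c b → ∀ d, subdividedPrism.Adj a d → subdividedPrism.Adj c d → b = d := by
    decide
  exact .of_commonNeighbors_subsingleton fun a c hac b hb d hd ↦
    unique_commonNeighbor a c hac b hb.1 hb.2 d hd.1 hd.2

theorem isCliquePartition_cliquePartition :
    IsCliquePartition subdividedPrism cliquePartition := by
  unfold IsCliquePartition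
  decide

theorem isFrozenCliquePartition_matching : IsFrozenCliquePartition subdividedPrism matching := by
  unfold IsFrozenCliquePartition IsCliquePartition
  decide

theorem matching_surjective : Function.Surjective matching := by
  decide

theorem isIndepSet_one_three_five_seven :
    subdividedPrism.IsIndepSet ({1, 3, 5, 7} : Finset (Fin 10)) := by
  have not_adj : ∀ a ∈ ({1, 3, 5, 7} : Finset (Fin 10)), ∀ b ∈ ({1, 3, 5, 7} : Finset (Fin 10)),
      ¬ subdividedPrism.Adj a b := by
    decide
  exact fun a ha b hb _ ↦ not_adj a ha b hb

theorem cliquePartNum_sum_bot (m : ℕ) :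
    cliquePartNum (subdividedPrism ⊕g (⊥ : SimpleGraph (Fin m))) = 4 + m := by
  have univ_isIndepSet : (⊥ : SimpleGraph (Fin m)).IsIndepSet (Finset.univ : Finset (Fin m)) :=
    fun _ _ _ _ _ ↦ not_false
  have sum_isCliquePartition :=
    isCliquePartition_cliquePartition.sum (IsFrozenCliquePartition.bot_id m).1
  exact sum_isCliquePartition.cliquePartNum_eq_of_isIndepSet
    (isIndepSet_disjSum isIndepSet_one_three_five_seven univ_isIndepSet) (by simp)

end subdividedPrism

theorem exists_c4Free_isFrozenCliquePartition {k : ℕ} (hk : 4 ≤ k) :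
    ∃ (n : ℕ) (H : SimpleGraph (Fin n)), C4Free H ∧ cliquePartNum H = k ∧
      ∃ g : Fin n → Fin (k + 1), IsFrozenCliquePartition H g := by
  obtain ⟨m, rfl⟩ := Nat.exists_eq_add_of_le hk
  let H := subdividedPrism ⊕g (⊥ : SimpleGraph (Fin m))
  let e : H.overFin rfl ≃g H := (H.overFinIso rfl).symm
  have exists_frozen : ∃ g : Fin 10 ⊕ Fin m → Fin (4 + m + 1), IsFrozenCliquePartition H g := by
    rw [show 4 + m + 1 = 5 + m by ring]
    exact ⟨_, subdividedPrism.isFrozenCliquePartition_matching.sum (.bot_id m)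
      subdividedPrism.matching_surjective Function.surjective_id⟩
  obtain ⟨g, hg⟩ := exists_frozen
  exact ⟨_, H.overFin rfl, (subdividedPrism.c4Free.sum .bot).of_embedding e.toEmbedding,
    (cliquePartNum_congr e).trans (subdividedPrism.cliquePartNum_sum_bot m), g ∘ e, hg.comp_iso e⟩

/-- for every `k ≥ 4` there is a `C₄`-free graph with clique partition
number `k` admitting a frozen `(k+1)`-clique-partition; consequently, for every `k ≥ 4`
there is a `2K₂`-free graph with chromatic number `k` admitting a frozen
`(k+1)`-colouring. -/
theorem stmt19 : ∀ k : ℕ, 4 ≤ k →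
    (∃ (n : ℕ) (H : SimpleGraph (Fin n)), C4Free H ∧ cliquePartNum H = k ∧
      ∃ g : Fin n → Fin (k+1), IsFrozenCliquePartition H g) ∧
    (∃ (n : ℕ) (G : SimpleGraph (Fin n)), TwoK2Free G ∧
      G.chromaticNumber = (k : ℕ∞) ∧
      ∃ C : G.Coloring (Fin (k+1)), IsFrozenColoring G C) := by
  intro k hk
  obtain ⟨n, H, hC4, hθ, g, hg⟩ := exists_c4Free_isFrozenCliquePartition hk
  exact ⟨⟨n, H, hC4, hθ, g, hg⟩, n, Hᶜ, hC4.twoK2Free_compl, hθ ▸ hg.1.chromaticNumber_compl,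
    hg.1.complColoring, hg.isFrozenColoring_complColoring⟩
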